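/- Let (G,P) be a quasi-lattice ordered group and (E,φ) a finitely aligned product system of graphs over P. Let F ⊆ E¹ be finite with s(λ) ∈ F for every λ ∈ F, let λ ∈ F have d(λ) ≠ e, and set G := F ∖ {λ}. Then for every γ ∈ ∨F ∖ ∨G there is a unique μ_γ ∈ ∨G such that whenever μ ∈ ∨G satisfies γ(e,d(μ)) = μ, one has d(μ) ≤ d(μ_γ). Moreover γ ∈ MCE(μ_γ, λ); in particular d(γ) = d(μ_γ) ∨ d(λ). -/

import Mathlib

open scoped Classical

noncomputable section

namespace PSG

variable {G : Type*} [Group G] {Λ : Type*}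

/-- `g ≤ h` in the left-invariant partial order induced by the submonoid `P`. -/
def qle (P : Submonoid G) (g h : G) : Prop := g⁻¹ * h ∈ P

/-- `r` is a common upper bound of `p` and `q` in `P`. -/
def IsUB (P : Submonoid G) (p q r : G) : Prop := r ∈ P ∧ qle P p r ∧ qle P q r

/-- `r` is the least common upper bound of `p` and `q` in `P`. -/
def IsLUB2 (P : Submonoid G) (p q r : G) : Prop :=
  IsUB P p q r ∧ ∀ r', IsUB P p q r' → qle P r r'

/-- `r` is the least upper bound in `P` of the set of degrees `D`. -/
def IsLUBFam (P : Submonoid G) (D : Set G) (r : G) : Prop :=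
  r ∈ P ∧ (∀ p ∈ D, qle P p r) ∧ ∀ r' ∈ P, (∀ p ∈ D, qle P p r') → qle P r r'

/-- `(G, P)` is quasi-lattice ordered: `P ∩ P⁻¹ = {1}` and every pair of elements of `P`
with a common upper bound in `P` has a least upper bound in `P`. -/
def QuasiLatticeOrdered (P : Submonoid G) : Prop :=
  (∀ g ∈ P, g⁻¹ ∈ P → g = 1) ∧
    ∀ p ∈ P, ∀ q ∈ P, (∃ r, IsUB P p q r) → ∃ r, IsLUB2 P p q r

/-- A product system of graphs over `P`, encoded on a single edge set `Λ` (which contains the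
vertices as the elements of degree `1`), with degree map `d`, source and range maps `src`, `rng`
(valued in vertices), and partial multiplication `mul` (meaningful when `rng a = src b`). -/
structure IsProductSystem (P : Submonoid G) (d : Λ → G) (src rng : Λ → Λ)
    (mul : Λ → Λ → Λ) : Prop where
  countable : Countable Λ
  d_mem : ∀ a, d a ∈ P
  d_src : ∀ a, d (src a) = 1
  d_rng : ∀ a, d (rng a) = 1
  src_vertex : ∀ v, d v = 1 → src v = v
  rng_vertex : ∀ v, d v = 1 → rng v = v
  d_mul : ∀ a b, rng a = src b → d (mul a b) = d a * d b
  src_mul : ∀ a b, rng a = src b → src (mul a b) = src a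
  rng_mul : ∀ a b, rng a = src b → rng (mul a b) = rng b
  mul_assoc' : ∀ a b c, rng a = src b → rng b = src c →
    mul (mul a b) c = mul a (mul b c)
  src_mul_self : ∀ a, mul (src a) a = a
  mul_rng_self : ∀ a, mul a (rng a) = a
  factor : ∀ p q : G, p ∈ P → q ∈ P → ∀ c, d c = p * q →
    ∃! ab : Λ × Λ, d ab.1 = p ∧ d ab.2 = q ∧ rng ab.1 = src ab.2 ∧ mul ab.1 ab.2 = c

/-- `a` is an initial segment of `c`: `c = a • b` for some (necessarily unique) `b`. -/
def IsInit (src rng : Λ → Λ) (mul : Λ → Λ → Λ) (a c : Λ) : Prop :=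
  ∃ b, rng a = src b ∧ mul a b = c

/-- The set of minimal common extensions of `μ` and `ν`. -/
def MCE (P : Submonoid G) (d : Λ → G) (src rng : Λ → Λ) (mul : Λ → Λ → Λ)
    (μ ν : Λ) : Set Λ :=
  {γ | IsInit src rng mul μ γ ∧ IsInit src rng mul ν γ ∧ IsLUB2 P (d μ) (d ν) (d γ)}

/-- The product system is finitely aligned. -/
def FinitelyAligned (P : Submonoid G) (d : Λ → G) (src rng : Λ → Λ)
    (mul : Λ → Λ → Λ) : Prop :=
  ∀ μ ν : Λ, (MCE P d src rng mul μ ν).Finite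

/-- The set of minimal common extensions of a set `S` of edges. -/
def MCEset (P : Submonoid G) (d : Λ → G) (src rng : Λ → Λ) (mul : Λ → Λ → Λ)
    (S : Set Λ) : Set Λ :=
  {γ | (∀ α ∈ S, IsInit src rng mul α γ) ∧ IsLUBFam P (d '' S) (d γ)}

/-- `∨F`: the union of `MCE(S)` over the nonempty subsets `S ⊆ F`. -/
def vee (P : Submonoid G) (d : Λ → G) (src rng : Λ → Λ) (mul : Λ → Λ → Λ)
    (F : Finset Λ) : Set Λ :=
  {γ | ∃ S : Finset Λ, S.Nonempty ∧ S ⊆ F ∧ γ ∈ MCEset P d src rng mul ↑S}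

/-- Given that `a` is an initial segment of `c`, the (unique) complementary segment;
junk value `c` otherwise. -/
def tail (src rng : Λ → Λ) (mul : Λ → Λ → Λ) (a c : Λ) : Λ :=
  if h : IsInit src rng mul a c then h.choose else c

section CstarFamilies

variable (P : Submonoid G) (d : Λ → G) (src rng : Λ → Λ) (mul : Λ → Λ → Λ)
variable {B : Type*} [CStarAlgebra B] [PartialOrder B] [StarOrderedRing B]

/-- A Toeplitz `E`-family in a C*-algebra `B` (conditions (1)–(4)). -/
structure IsToeplitzFamily (t : Λ → B) : Prop where
  vertex_sa : ∀ v, d v = 1 → IsSelfAdjoint (t v)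
  vertex_idem : ∀ v, d v = 1 → t v * t v = t v
  vertex_orth : ∀ v w, d v = 1 → d w = 1 → v ≠ w → t v * t w = 0
  mul_eq : ∀ a b, rng a = src b → t a * t b = t (mul a b)
  star_mul_self : ∀ a, star (t a) * t a = t (rng a)
  dom : ∀ p : G, p ∈ P → p ≠ 1 → ∀ v, d v = 1 → ∀ F : Finset Λ,
    (∀ a ∈ F, d a = p ∧ src a = v) → (∑ a ∈ F, t a * star (t a)) ≤ t v

/-- The Nica-covariance/Cuntz–Krieger relation (5):
`tμ* tν = ∑_{γ = μα = νβ ∈ MCE(μ,ν)} tα tβ*`. -/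
def TCKrel (t : Λ → B) : Prop :=
  ∀ μ ν : Λ, ∀ M : Finset Λ, ↑M = MCE P d src rng mul μ ν →
    star (t μ) * t ν =
      ∑ γ ∈ M, t (tail src rng mul μ γ) * star (t (tail src rng mul ν γ))

/-- A Toeplitz–Cuntz–Krieger `E`-family: conditions (1)–(5). -/
def IsTCKFamily (t : Λ → B) : Prop :=
  IsToeplitzFamily P d src rng mul t ∧ TCKrel P d src rng mul t

/-- Condition (†): for every finite `R ⊆ P∖{1}`, every vertex `v`, and all finite sets
`F_p ⊆ s_p⁻¹(v)` (`p ∈ R`), the product `∏_{p ∈ R} (t_v − ∑_{a ∈ F_p} t_a t_a*)` is nonzero.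
(The factors commute, so the product is stated for an arbitrary enumeration of `R`.) -/
def Dagger (t : Λ → B) : Prop :=
  ∀ R : List G, R.Nodup → (∀ p ∈ R, p ∈ P ∧ p ≠ 1) →
    ∀ v, d v = 1 → ∀ Fp : G → Finset Λ,
      (∀ p ∈ R, ∀ a ∈ Fp p, d a = p ∧ src a = v) →
        (R.map fun p => t v - ∑ a ∈ Fp p, t a * star (t a)).prod ≠ 0

/-- The projection `Q^{∨F}_l = t_l t_l* ∏_{l α ∈ ∨F, d α ≠ 1} (t_{s(l)} − t_{lα} t_{lα}*)`.
(The factors commute, so the product is computed over an arbitrary enumeration.) -/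
def Qproj (t : Λ → B) (F : Finset Λ) (l : Λ) : B :=
  if h : {α : Λ | d α ≠ 1 ∧ rng l = src α ∧ mul l α ∈ vee P d src rng mul F}.Finite then
    t l * star (t l) *
      (h.toFinset.toList.map fun α =>
        t (src l) - t (mul l α) * star (t (mul l α))).prod
  else 0

end CstarFamilies

/-- The positive cone `ℕ^k` inside `ℤ^k` (written multiplicatively). -/
def posCone (k : ℕ) : Submonoid (Multiplicative (Fin k → ℤ)) where
  carrier := {g | ∀ i, 0 ≤ Multiplicative.toAdd g i}
  mul_mem' := by
    intro a b ha hb i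
    simpa using add_nonneg (ha i) (hb i)
  one_mem' := by
    intro i
    simp

/-- The `i`-th standard generator of `ℕ^k ⊆ ℤ^k`. -/
def egen (k : ℕ) (i : Fin k) : Multiplicative (Fin k → ℤ) :=
  Multiplicative.ofAdd (Pi.single i 1)

end PSG
namespace PSG

/-!
Initial segments of a fixed edge `γ` are determined by their degrees, and are nested as soon as
their degrees are comparable. The members of `F \ {l}` that are initial segments of `γ`
(`src l` is one, as `d l ≠ 1`) have degrees bounded by `d γ`, so these degrees have a least upper
bound `q ≤ d γ`; the initial segment of `γ` of degree `q` is the required `μ_γ`. If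
`γ ∈ MCE(S)` lies outside `∨(F \ {l})`, then `l ∈ S`, and every other member of `S` has degree at
most `d μ_γ`, so the least upper bound `d γ` of the degrees in `S` is already `d μ_γ ∨ d l`.
-/

section Order

variable {G : Type*} [Group G] {P : Submonoid G}

theorem qle_refl (g : G) : qle P g g := by
  simp [qle]

theorem qle_trans {a b c : G} (hab : qle P a b) (hbc : qle P b c) : qle P a c := by
  simpa [qle, mul_assoc] using P.mul_mem hab hbc

theorem QuasiLatticeOrdered.qle_antisymm (hQLO : QuasiLatticeOrdered P) {a b : G}
    (hab : qle P a b) (hba : qle P b a) : a = b :=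
  inv_mul_eq_one.mp (hQLO.1 (a⁻¹ * b) hab (by simpa [qle] using hba))

theorem isLUBFam_empty : IsLUBFam P ∅ 1 :=
  ⟨P.one_mem, by simp, fun r hr _ => by simpa [qle] using hr⟩

theorem isLUBFam_singleton {p : G} (hp : p ∈ P) : IsLUBFam P {p} p :=
  ⟨hp, by simp [qle_refl], fun _ _ h => h p rfl⟩

theorem IsLUBFam.insert {D : Set G} {p q r : G} (hq : IsLUBFam P D q) (hr : IsLUB2 P p q r) :
    IsLUBFam P (insert p D) r := by
  obtain ⟨⟨hrP, hpr, hqr⟩, hmin⟩ := hr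
  refine ⟨hrP, ?_, fun u hu h => ?_⟩
  · rintro x (rfl | hx)
    · exact hpr
    · exact qle_trans (hq.2.1 x hx) hqr
  · have hqu : qle P q u := hq.2.2 u hu fun x hx => h x (Set.mem_insert_of_mem p hx)
    exact hmin u ⟨hu, h p (Set.mem_insert p D), hqu⟩

theorem IsLUBFam.qle_of_subset {D D' : Set G} {q r : G} (hq : IsLUBFam P D q)
    (hr : IsLUBFam P D' r) (hD : D ⊆ D') : qle P q r :=
  hq.2.2 r hr.1 fun p hp => hr.2.1 p (hD hp)

theorem IsLUBFam.isLUB2_of_forall_qle_or_qle {D : Set G} {p q r : G} (hr : IsLUBFam P D r)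
    (hpr : qle P p r) (hqr : qle P q r) (hD : ∀ x ∈ D, qle P x p ∨ qle P x q) :
    IsLUB2 P p q r := by
  refine ⟨⟨hr.1, hpr, hqr⟩, fun u ⟨hu, hpu, hqu⟩ => hr.2.2 u hu fun x hx => ?_⟩
  exact (hD x hx).elim (qle_trans · hpu) (qle_trans · hqu)

theorem QuasiLatticeOrdered.exists_isLUBFam (hQLO : QuasiLatticeOrdered P) {D : Set G}
    (hfin : D.Finite) (hDP : D ⊆ P) {u : G} (hu : u ∈ P) (hDu : ∀ p ∈ D, qle P p u) :
    ∃ q, IsLUBFam P D q := by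
  induction D, hfin using Set.Finite.induction_on with
  | empty => exact ⟨1, isLUBFam_empty⟩
  | @insert p D _ _ ih =>
    obtain ⟨hpP, hDP⟩ := Set.insert_subset_iff.mp hDP
    obtain ⟨hpu, hDu⟩ := Set.forall_mem_insert.mp hDu
    obtain ⟨q, hq⟩ := ih hDP hDu
    obtain ⟨r, hr⟩ := hQLO.2 p hpP q hq.1 ⟨u, hu, hpu, hq.2.2 u hu hDu⟩
    exact ⟨r, hq.insert hr⟩

end Order

section ProductSystem

variable {G : Type*} [Group G] {Λ : Type*} {P : Submonoid G} {d : Λ → G} {src rng : Λ → Λ}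
  {mul : Λ → Λ → Λ}

namespace IsProductSystem

theorem isInit_refl (hPS : IsProductSystem P d src rng mul) (a : Λ) :
    IsInit src rng mul a a :=
  ⟨rng a, (hPS.src_vertex _ (hPS.d_rng a)).symm, hPS.mul_rng_self a⟩

theorem isInit_trans (hPS : IsProductSystem P d src rng mul) {a b c : Λ}
    (hab : IsInit src rng mul a b) (hbc : IsInit src rng mul b c) : IsInit src rng mul a c := by
  obtain ⟨x, hx, rfl⟩ := hab
  obtain ⟨y, hy, rfl⟩ := hbc
  rw [hPS.rng_mul _ _ hx] at hy
  exact ⟨mul x y, by rw [hPS.src_mul _ _ hy, hx], (hPS.mul_assoc' _ _ _ hx hy).symm⟩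

theorem src_isInit (hPS : IsProductSystem P d src rng mul) (a : Λ) :
    IsInit src rng mul (src a) a :=
  ⟨a, hPS.rng_vertex _ (hPS.d_src a), hPS.src_mul_self a⟩

theorem qle_of_isInit (hPS : IsProductSystem P d src rng mul) {a c : Λ}
    (h : IsInit src rng mul a c) : qle P (d a) (d c) := by
  obtain ⟨b, hb, rfl⟩ := h
  simpa [qle, hPS.d_mul _ _ hb] using hPS.d_mem b

theorem exists_isInit_d_eq (hPS : IsProductSystem P d src rng mul) {c : Λ} {p : G} (hp : p ∈ P)
    (hpc : qle P p (d c)) : ∃ a, IsInit src rng mul a c ∧ d a = p := by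
  obtain ⟨⟨a, b⟩, ⟨ha, -, hab, hc⟩, -⟩ := hPS.factor p (p⁻¹ * d c) hp hpc c (by simp)
  exact ⟨a, ⟨b, hab, hc⟩, ha⟩

theorem eq_of_isInit_of_d_eq (hPS : IsProductSystem P d src rng mul) {a a' c : Λ}
    (ha : IsInit src rng mul a c) (ha' : IsInit src rng mul a' c) (h : d a = d a') :
    a = a' := by
  obtain ⟨b, hb, hc⟩ := ha
  obtain ⟨b', hb', hc'⟩ := ha'
  have hd : d c = d a * d b := by rw [← hc, hPS.d_mul _ _ hb]
  have hd' : d c = d a * d b' := by rw [← hc', hPS.d_mul _ _ hb', h]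
  have hbb' : d b' = d b := mul_left_cancel (hd'.symm.trans hd)
  have hpair : (a, b) = (a', b') :=
    (hPS.factor (d a) (d b) (hPS.d_mem a) (hPS.d_mem b) c hd).unique
      ⟨rfl, rfl, hb, hc⟩ ⟨h.symm, hbb', hb', hc'⟩
  exact congrArg Prod.fst hpair

theorem isInit_of_qle (hPS : IsProductSystem P d src rng mul) {a m c : Λ}
    (ha : IsInit src rng mul a c) (hm : IsInit src rng mul m c) (h : qle P (d a) (d m)) :
    IsInit src rng mul a m := by
  obtain ⟨a', ha', hd⟩ := hPS.exists_isInit_d_eq (hPS.d_mem a) h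
  rwa [hPS.eq_of_isInit_of_d_eq ha (hPS.isInit_trans ha' hm) hd.symm]

theorem exists_mem_mceset_isInit (hPS : IsProductSystem P d src rng mul)
    (hQLO : QuasiLatticeOrdered P) {S : Set Λ} (hfin : S.Finite) {γ : Λ}
    (hS : ∀ a ∈ S, IsInit src rng mul a γ) :
    ∃ m ∈ MCEset P d src rng mul S, IsInit src rng mul m γ := by
  have hbound : ∀ p ∈ d '' S, qle P p (d γ) :=
    Set.forall_mem_image.mpr fun a ha => hPS.qle_of_isInit (hS a ha)
  obtain ⟨q, hq⟩ := hQLO.exists_isLUBFam (hfin.image d)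
    (Set.image_subset_iff.mpr fun a _ => hPS.d_mem a) (hPS.d_mem γ) hbound
  obtain ⟨m, hmγ, rfl⟩ := hPS.exists_isInit_d_eq hq.1 (hq.2.2 _ (hPS.d_mem γ) hbound)
  have hSm : ∀ a ∈ S, IsInit src rng mul a m := fun a ha =>
    hPS.isInit_of_qle (hS a ha) hmγ (hq.2.1 _ (Set.mem_image_of_mem d ha))
  exact ⟨m, ⟨hSm, hq⟩, hmγ⟩

theorem mem_vee_of_mem (hPS : IsProductSystem P d src rng mul) {F : Finset Λ} {a : Λ}
    (ha : a ∈ F) : a ∈ vee P d src rng mul F := by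
  refine ⟨{a}, Finset.singleton_nonempty a, Finset.singleton_subset_iff.mpr ha, ?_, ?_⟩
  · simpa using hPS.isInit_refl a
  · simpa using isLUBFam_singleton (hPS.d_mem a)

end IsProductSystem

theorem exists_mem_mceset_of_mem_vee_diff {F : Finset Λ} {l γ : Λ}
    (hγ : γ ∈ vee P d src rng mul F \ vee P d src rng mul (F.erase l)) :
    ∃ S ⊆ F, l ∈ S ∧ γ ∈ MCEset P d src rng mul ↑S := by
  obtain ⟨⟨S, hS, hSF, hγS⟩, hγF⟩ := hγ
  refine ⟨S, hSF, ?_, hγS⟩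
  by_contra hlS
  exact hγF ⟨S, hS, Finset.subset_erase.mpr ⟨hSF, hlS⟩, hγS⟩

/-- `m` is the greatest initial segment of `γ` in `A`: with `A = ∨(F \ {l})` this is the edge
`μ_γ` of Lemma 7.5. Segments are compared through their degrees, as in the paper; for initial
segments of the same edge this is the initial-segment order. -/
def IsGreatestInit (P : Submonoid G) (d : Λ → G) (src rng : Λ → Λ) (mul : Λ → Λ → Λ)
    (A : Set Λ) (γ m : Λ) : Prop :=
  m ∈ A ∧ IsInit src rng mul m γ ∧ ∀ μ ∈ A, IsInit src rng mul μ γ → qle P (d μ) (d m)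

theorem IsGreatestInit.unique (hPS : IsProductSystem P d src rng mul)
    (hQLO : QuasiLatticeOrdered P) {A : Set Λ} {γ m m' : Λ}
    (hm : IsGreatestInit P d src rng mul A γ m) (hm' : IsGreatestInit P d src rng mul A γ m') :
    m = m' :=
  hPS.eq_of_isInit_of_d_eq hm.2.1 hm'.2.1
    (hQLO.qle_antisymm (hm'.2.2 m hm.1 hm.2.1) (hm.2.2 m' hm'.1 hm'.2.1))

theorem exists_isGreatestInit_vee (hPS : IsProductSystem P d src rng mul)
    (hQLO : QuasiLatticeOrdered P) {F : Finset Λ} {a γ : Λ} (ha : a ∈ F)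
    (haγ : IsInit src rng mul a γ) :
    ∃ m, IsGreatestInit P d src rng mul (vee P d src rng mul F) γ m := by
  let T : Finset Λ := {b ∈ F | IsInit src rng mul b γ}
  have hT : ∀ b ∈ (T : Set Λ), IsInit src rng mul b γ := fun b hb => (Finset.mem_filter.mp hb).2
  obtain ⟨m, hmT, hmγ⟩ := hPS.exists_mem_mceset_isInit hQLO T.finite_toSet hT
  refine ⟨m, ⟨T, ⟨a, Finset.mem_filter.mpr ⟨ha, haγ⟩⟩, Finset.filter_subset _ F, hmT⟩, hmγ, ?_⟩
  rintro μ ⟨S, -, hSF, hSμ, hμ⟩ hμγ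
  have hST : S ⊆ T := fun b hb =>
    Finset.mem_filter.mpr ⟨hSF hb, hPS.isInit_trans (hSμ b hb) hμγ⟩
  exact hμ.qle_of_subset hmT.2 (Set.image_mono hST)

theorem IsGreatestInit.mem_mce (hPS : IsProductSystem P d src rng mul) {F : Finset Λ}
    {l γ m : Λ} (hγ : γ ∈ vee P d src rng mul F \ vee P d src rng mul (F.erase l))
    (hm : IsGreatestInit P d src rng mul (vee P d src rng mul (F.erase l)) γ m) :
    γ ∈ MCE P d src rng mul m l := by
  obtain ⟨S, hSF, hlS, hSγ, hγS⟩ := exists_mem_mceset_of_mem_vee_diff hγ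
  obtain ⟨-, hmγ, hmax⟩ := hm
  have hlγ : IsInit src rng mul l γ := hSγ l hlS
  have hdS : ∀ p ∈ d '' (S : Set Λ), qle P p (d m) ∨ qle P p (d l) := by
    rintro _ ⟨a, haS, rfl⟩
    obtain rfl | hal := eq_or_ne a l
    · exact .inr (qle_refl _)
    · have ha : a ∈ F.erase l := Finset.mem_erase.mpr ⟨hal, hSF haS⟩
      exact .inl (hmax a (hPS.mem_vee_of_mem ha) (hSγ a haS))
  exact ⟨hmγ, hlγ, hγS.isLUB2_of_forall_qle_or_qle (hPS.qle_of_isInit hmγ)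
    (hPS.qle_of_isInit hlγ) hdS⟩

end ProductSystem

theorem stmt2_general {G : Type*} [Group G] {Λ : Type*} {P : Submonoid G}
    (hQLO : QuasiLatticeOrdered P) {d : Λ → G} {src rng : Λ → Λ} {mul : Λ → Λ → Λ}
    (hPS : IsProductSystem P d src rng mul) {F : Finset Λ} {a l : Λ} (ha : a ∈ F.erase l)
    (hal : IsInit src rng mul a l) {γ : Λ}
    (hγ : γ ∈ vee P d src rng mul F \ vee P d src rng mul (F.erase l)) :
    (∃! m, IsGreatestInit P d src rng mul (vee P d src rng mul (F.erase l)) γ m) ∧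
      ∀ m, IsGreatestInit P d src rng mul (vee P d src rng mul (F.erase l)) γ m →
        γ ∈ MCE P d src rng mul m l := by
  obtain ⟨S, -, hlS, hSγ, -⟩ := exists_mem_mceset_of_mem_vee_diff hγ
  obtain ⟨m, hm⟩ := exists_isGreatestInit_vee hPS hQLO ha (hPS.isInit_trans hal (hSγ l hlS))
  exact ⟨⟨m, hm, fun _ hm' => hm'.unique hPS hQLO hm⟩, fun _ hm' => hm'.mem_mce hPS hγ⟩

/-- Lemma 7.5 (maximal subpaths): for `γ ∈ ∨F ∖ ∨G` (where `G = F ∖ {λ}`), there is a unique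
maximal initial segment `μ_γ` of `γ` lying in `∨G`, and `γ ∈ MCE(μ_γ, λ)`; in particular
`d(γ) = d(μ_γ) ∨ d(λ)`. -/
theorem stmt2 {G : Type*} [Group G] {Λ : Type*} (P : Submonoid G)
    (hQLO : QuasiLatticeOrdered P)
    (d : Λ → G) (src rng : Λ → Λ) (mul : Λ → Λ → Λ)
    (hPS : IsProductSystem P d src rng mul)
    (hFA : FinitelyAligned P d src rng mul)
    (F : Finset Λ) (hsrc : ∀ a ∈ F, src a ∈ F)
    (l : Λ) (hl : l ∈ F) (hdl : d l ≠ 1) :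
    ∀ γ ∈ vee P d src rng mul F \ vee P d src rng mul (F.erase l),
      (∃! m : Λ, m ∈ vee P d src rng mul (F.erase l) ∧ IsInit src rng mul m γ ∧
        ∀ μ ∈ vee P d src rng mul (F.erase l), IsInit src rng mul μ γ →
          qle P (d μ) (d m)) ∧
      (∀ m : Λ,
        (m ∈ vee P d src rng mul (F.erase l) ∧ IsInit src rng mul m γ ∧
          ∀ μ ∈ vee P d src rng mul (F.erase l), IsInit src rng mul μ γ →
            qle P (d μ) (d m)) →
        γ ∈ MCE P d src rng mul m l ∧ IsLUB2 P (d m) (d l) (d γ)) := by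
  intro γ hγ
  have hsl : src l ∈ F.erase l :=
    Finset.mem_erase.mpr ⟨fun h => hdl (h ▸ hPS.d_src l), hsrc l hl⟩
  obtain ⟨hunique, hmce⟩ := stmt2_general hQLO hPS hsl (hPS.src_isInit l) hγ
  exact ⟨hunique, fun m hm => ⟨hmce m hm, (hmce m hm).2.2⟩⟩

end PSG
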